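/- Let n ≥ 2, let Ω, Ω̃ ⊆ ℝⁿ be bounded, uniformly convex open domains with smooth boundary with defining functions h̃ and h respectively, and suppose the closure of Ω̃ is contained in the open unit ball B₁(0). Then there exists a constant C₁ > 0, depending only on Ω and Ω̃ (i.e., on the defining functions and their convexity constants), such that for every strictly convex solution (u, c) of the second boundary value problem for the Lorentz mean curvature operator on (Ω, Ω̃) and every x ∈ ∂Ω, ⟨∇h(∇u(x)), ∇h̃(x)⟩ ≥ 1/C₁ > 0 (the strict obliqueness estimate). -/

import Mathlib

noncomputable section
open MeasureTheory
open scoped RealInnerProductSpace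

/-- The `i`-th standard basis vector of `ℝⁿ`. -/
def ev (n : ℕ) (i : Fin n) : EuclideanSpace ℝ (Fin n) := EuclideanSpace.single i 1

/-- Lorentz mean curvature operator `M[u] x = ∑ i, ∂ᵢ (∂ᵢ u / √(1 - |∇u|²)) x`. -/
def MOp (n : ℕ) (u : EuclideanSpace ℝ (Fin n) → ℝ) (x : EuclideanSpace ℝ (Fin n)) : ℝ :=
  ∑ i : Fin n,
    fderiv ℝ (fun y => fderiv ℝ u y (ev n i) / Real.sqrt (1 - ‖gradient u y‖ ^ 2)) x (ev n i)

/-- Euclidean mean curvature operator `E[u] x = ∑ i, ∂ᵢ (∂ᵢ u / √(1 + |∇u|²)) x`. -/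
def EOp (n : ℕ) (u : EuclideanSpace ℝ (Fin n) → ℝ) (x : EuclideanSpace ℝ (Fin n)) : ℝ :=
  ∑ i : Fin n,
    fderiv ℝ (fun y => fderiv ℝ u y (ev n i) / Real.sqrt (1 + ‖gradient u y‖ ^ 2)) x (ev n i)

/-- `Ω` is a uniformly convex domain with smooth boundary, exhibited by the defining
function `h` with uniform concavity constant `θ`:  `h` is smooth, `Ω = {h > 0}`,
`|∇h| = 1` on `∂Ω`, and `⟨ξ, D²h(p) ξ⟩ ≤ -θ |ξ|²` for all `p, ξ`. -/
def IsUnifConvexDefFn (n : ℕ) (Ω : Set (EuclideanSpace ℝ (Fin n)))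
    (h : EuclideanSpace ℝ (Fin n) → ℝ) (θ : ℝ) : Prop :=
  ContDiff ℝ (⊤ : ℕ∞) h ∧ Ω = {p | 0 < h p} ∧
  (∀ p ∈ frontier Ω, ‖gradient h p‖ = 1) ∧ 0 < θ ∧
  ∀ p ξ : EuclideanSpace ℝ (Fin n), ⟪ξ, fderiv ℝ (gradient h) p ξ⟫ ≤ -θ * ‖ξ‖ ^ 2

/-- `u` is smooth on the closure of `Ω` (i.e. on an open neighbourhood of it). -/
def SmoothOnClosure (n : ℕ) (Ω : Set (EuclideanSpace ℝ (Fin n)))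
    (u : EuclideanSpace ℝ (Fin n) → ℝ) : Prop :=
  ∃ U : Set (EuclideanSpace ℝ (Fin n)), IsOpen U ∧ closure Ω ⊆ U ∧ ContDiffOn ℝ (⊤ : ℕ∞) u U

/-- `(u, c)` is a strictly convex solution of the second boundary value problem for the
Lorentz mean curvature operator on `(Ω, Ω')`: `u` is smooth up to the boundary, spacelike
(`|∇u| < 1`), has positive definite Hessian `D²u` on the closure of `Ω`, its gradient map
is a bijection from `Ω` onto `Ω'`, and `M[u] = c` on `Ω`. -/
def IsSol (n : ℕ) (Ω Ω' : Set (EuclideanSpace ℝ (Fin n)))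
    (u : EuclideanSpace ℝ (Fin n) → ℝ) (c : ℝ) : Prop :=
  SmoothOnClosure n Ω u ∧
  (∀ x ∈ closure Ω, ‖gradient u x‖ < 1) ∧
  (∀ x ∈ closure Ω, ∀ ξ : EuclideanSpace ℝ (Fin n), ξ ≠ 0 →
      0 < ⟪ξ, fderiv ℝ (gradient u) x ξ⟫) ∧
  Set.BijOn (gradient u) Ω Ω' ∧
  (∀ x ∈ Ω, MOp n u x = c)

/-- `(u, c)` is a strictly convex solution of the second boundary value problem for the
Euclidean mean curvature operator on `(Ω, Ω')`. -/
def IsSolE (n : ℕ) (Ω Ω' : Set (EuclideanSpace ℝ (Fin n)))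
    (u : EuclideanSpace ℝ (Fin n) → ℝ) (c : ℝ) : Prop :=
  SmoothOnClosure n Ω u ∧
  (∀ x ∈ closure Ω, ∀ ξ : EuclideanSpace ℝ (Fin n), ξ ≠ 0 →
      0 < ⟪ξ, fderiv ℝ (gradient u) x ξ⟫) ∧
  Set.BijOn (gradient u) Ω Ω' ∧
  (∀ x ∈ Ω, EOp n u x = c)

/-- `ut` is the Legendre transform of `u`: it is smooth up to the boundary of `Ω'`,
satisfies `ut (∇u x) = ⟨x, ∇u x⟩ - u x` and `∇ut (∇u x) = x` for `x ∈ Ω`. -/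
def IsLegendre (n : ℕ) (Ω Ω' : Set (EuclideanSpace ℝ (Fin n)))
    (u ut : EuclideanSpace ℝ (Fin n) → ℝ) : Prop :=
  SmoothOnClosure n Ω' ut ∧
  (∀ x ∈ Ω, ut (gradient u x) = ⟪x, gradient u x⟫ - u x) ∧
  (∀ x ∈ Ω, gradient ut (gradient u x) = x)

/-- The coefficient matrix `s_ij(p) = (δ_ij + pᵢpⱼ/(1 - |p|²)) / √(1 - |p|²)` of the
Lorentz mean curvature operator written in nondivergence form. -/
def sMat (n : ℕ) (p : EuclideanSpace ℝ (Fin n)) (i j : Fin n) : ℝ :=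
  ((if i = j then (1 : ℝ) else 0) + p i * p j / (1 - ‖p‖ ^ 2)) / Real.sqrt (1 - ‖p‖ ^ 2)

/-- `Ω` has smooth boundary: it is the superlevel set of a smooth function whose
gradient does not vanish on the boundary. -/
def HasSmoothBoundary (n : ℕ) (Ω : Set (EuclideanSpace ℝ (Fin n))) : Prop :=
  ∃ g : EuclideanSpace ℝ (Fin n) → ℝ, ContDiff ℝ (⊤ : ℕ∞) g ∧ Ω = {p | 0 < g p} ∧
    ∀ p ∈ frontier Ω, gradient g p ≠ 0

/-- `B(p) = Iₙ + p pᵀ / (v (1 + v))`, `v = √(1 - |p|²)`: the positive square root of the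
inverse induced metric of a spacelike graph with gradient `p`. -/
def sqB (n : ℕ) (p : EuclideanSpace ℝ (Fin n)) : Matrix (Fin n) (Fin n) ℝ :=
  1 + (Real.sqrt (1 - ‖p‖ ^ 2) * (1 + Real.sqrt (1 - ‖p‖ ^ 2)))⁻¹ •
      Matrix.of fun i j => p i * p j

/-- `B'(p) = Iₙ - p pᵀ / (1 + v)`, `v = √(1 - |p|²)`: the square root of the induced
metric of a spacelike graph with gradient `p`. -/
def sqBinv (n : ℕ) (p : EuclideanSpace ℝ (Fin n)) : Matrix (Fin n) (Fin n) ℝ :=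
  1 - (1 + Real.sqrt (1 - ‖p‖ ^ 2))⁻¹ • Matrix.of fun i j => p i * p j

/-!
Write `p = ∇u`, `A = D²u`. The equation bounds `tr A` by `c`, and `c` lies between positive
constants depending only on the domains: touching `u` from above by a paraboloid of opening `~ 1/r`
in a ball of radius `r` in `Ω` gives the upper bound, and `|Ω'| = |∇u(Ω)| ≤ cⁿ |Ω|` the lower one.

Differentiating the equation in the direction `b = ∇h(∇u)` gives
`lorentzOp p (∂_b D²u) ≤ 7 c |A b|`. At an interior minimum of `h ∘ ∇u - ε g`, where `A b = ε ∇g`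
is small, this is incompatible with the uniform concavity of `h`, since `tr A²` is bounded below.
Both functions vanish on `∂Ω`, so `h ∘ ∇u ≥ ε g` in `Ω`, and hence `A b = (l + ε) ν` on `∂Ω` for
some `l ≥ 0`. Finally `|A b|² ≤ tr A ⟨b, A b⟩` turns this into `l + ε ≤ c ⟨b, ν⟩`.
-/

open Filter Topology

section Calculus

theorem hasDerivAt_comp_line {E F : Type*} [NormedAddCommGroup E] [NormedSpace ℝ E]
    [NormedAddCommGroup F] [NormedSpace ℝ F] {φ : E → F} {L : E →L[ℝ] F} {x e : E} {t : ℝ}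
    (hφ : HasFDerivAt φ L (x + t • e)) : HasDerivAt (fun s : ℝ ↦ φ (x + s • e)) (L e) t :=
  hφ.comp_hasDerivAt t (by simpa using ((hasDerivAt_id t).smul_const e).const_add x)

theorem deriv_deriv_nonneg_of_isLocalMin {p : ℝ → ℝ} {t : ℝ} (hp : IsLocalMin p t)
    (hcont : ContinuousAt p t) : 0 ≤ deriv (deriv p) t := by
  by_contra! hneg
  have hmax : IsLocalMax p t := isLocalMax_of_deriv_deriv_neg hneg hp.deriv_eq_zero hcont
  have hconst : p =ᶠ[𝓝 t] fun _ ↦ p t := by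
    filter_upwards [hp, hmax] with s hle hge using le_antisymm hge hle
  simp [hconst.deriv.deriv_eq] at hneg

theorem exists_nonneg_smul_eq_of_forall_inner_nonneg {E : Type*} [NormedAddCommGroup E]
    [InnerProductSpace ℝ E] {a ν : E} (hν : ν ≠ 0) (ha : ∀ ξ, 0 < ⟪ν, ξ⟫ → 0 ≤ ⟪a, ξ⟫) :
    ∃ l : ℝ, 0 ≤ l ∧ a = l • ν := by
  have hνν : 0 < ⟪ν, ν⟫ := real_inner_self_pos.2 hν
  set l := ⟪a, ν⟫ / ⟪ν, ν⟫ with hl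
  set b := a - l • ν with hb
  have hb_orth : ⟪ν, b⟫ = 0 := by
    rw [hb, inner_sub_right, real_inner_smul_right, real_inner_comm, hl]
    field_simp
    simp
  have hab : ⟪a, b⟫ = ⟪b, b⟫ := by
    rw [← sub_eq_zero, ← inner_sub_left, hb, sub_sub_cancel, real_inner_smul_left, hb_orth,
      mul_zero]
  have hbound : ∀ t : ℝ, 0 < t → ⟪b, b⟫ ≤ t * ⟪a, ν⟫ := fun t ht ↦ by
    have := ha (t • ν - b) (by
      rw [inner_sub_right, hb_orth, sub_zero, real_inner_smul_right]; positivity)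
    rwa [inner_sub_right, hab, real_inner_smul_right, sub_nonneg] at this
  have htend : Tendsto (fun t : ℝ ↦ t * ⟪a, ν⟫) (𝓝[>] 0) (𝓝 0) :=
    tendsto_nhdsWithin_of_tendsto_nhds (Continuous.tendsto' (by fun_prop) 0 0 (zero_mul _))
  have hb_zero : b = 0 := real_inner_self_nonpos.1
    (ge_of_tendsto htend (eventually_mem_nhdsWithin.mono hbound))
  exact ⟨l, div_nonneg (ha ν hνν) hνν.le, sub_eq_zero.1 hb_zero⟩

variable {E : Type*} [NormedAddCommGroup E] [InnerProductSpace ℝ E] [CompleteSpace E]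
  {f g : E → ℝ} {x : E}

theorem contDiffAt_gradient {m n : WithTop ℕ∞} (hf : ContDiffAt ℝ n f x) (hmn : m + 1 ≤ n) :
    ContDiffAt ℝ m (gradient f) x :=
  (InnerProductSpace.toDual ℝ E).symm.contDiff.contDiffAt.comp x (hf.fderiv_right hmn)

theorem hasFDerivAt_gradient (hf : ContDiffAt ℝ 2 f x) :
    HasFDerivAt (gradient f) (fderiv ℝ (gradient f) x) x :=
  ((contDiffAt_gradient (m := 1) hf (by norm_num)).differentiableAt one_ne_zero).hasFDerivAt

theorem isSymmetric_fderiv_gradient (hf : ContDiffAt ℝ 2 f x) :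
    (fderiv ℝ (gradient f) x : E →ₗ[ℝ] E).IsSymmetric := by
  intro a b
  have hfirst : ∀ᶠ y in 𝓝 x, HasFDerivAt f (innerSL ℝ (gradient f y)) y := by
    filter_upwards [hf.eventually (by simp)] with y hy
    exact (hy.differentiableAt two_ne_zero).hasGradientAt.hasFDerivAt
  have hsecond := (innerSL ℝ).hasFDerivAt.comp x (hasFDerivAt_gradient hf)
  rw [ContinuousLinearMap.coe_coe, real_inner_comm _ a]
  exact second_derivative_symmetric_of_eventually hfirst hsecond a b

theorem hasGradientAt_comp {G : E → E} {A : E →L[ℝ] E} {b : E} (hf : HasGradientAt f b (G x))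
    (hG : HasFDerivAt G A x) (hA : (A : E →ₗ[ℝ] E).IsSymmetric) :
    HasGradientAt (f ∘ G) (A b) x := by
  refine hasGradientAt_iff_hasFDerivAt.2 ((hf.hasFDerivAt.comp x hG).congr_fderiv ?_)
  ext e
  exact (hA b e).symm

theorem inner_nonneg_of_isLocalMin_of_hasGradientAt {F : E → E} {F' : E →L[ℝ] E}
    (hmin : IsLocalMin f x) (hF : ∀ᶠ y in 𝓝 x, HasGradientAt f (F y) y) (hF' : HasFDerivAt F F' x)
    (e : E) : 0 ≤ ⟪e, F' e⟫ := by
  have hline : Tendsto (fun t : ℝ ↦ x + t • e) (𝓝 0) (𝓝 x) :=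
    Continuous.tendsto' (by fun_prop) 0 x (by simp)
  have hfirst : ∀ᶠ t in 𝓝 (0 : ℝ), HasDerivAt (fun s : ℝ ↦ f (x + s • e)) ⟪F (x + t • e), e⟫ t :=
    (hline.eventually hF).mono fun t ht ↦ hasDerivAt_comp_line ht.hasFDerivAt
  have hsecond : HasDerivAt (fun t : ℝ ↦ ⟪F (x + t • e), e⟫) ⟪e, F' e⟫ 0 := by
    simpa [real_inner_comm] using
      (hasDerivAt_comp_line (x := x) (e := e) (t := 0) (by simpa using hF')).inner ℝ
        (hasDerivAt_const 0 e)
  have hline_min : IsLocalMin (fun t : ℝ ↦ f (x + t • e)) 0 := by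
    simpa [IsLocalMin, IsMinFilter] using hline.eventually hmin
  have hderiv : deriv (fun t : ℝ ↦ f (x + t • e)) =ᶠ[𝓝 0] fun t ↦ ⟪F (x + t • e), e⟫ :=
    hfirst.mono fun t ht ↦ ht.deriv
  rw [← hsecond.deriv, ← hderiv.deriv_eq]
  exact deriv_deriv_nonneg_of_isLocalMin hline_min hfirst.self_of_nhds.continuousAt

theorem exists_nonneg_smul_gradient_eq {a ν : E} (hf : HasGradientAt f a x)
    (hg : HasGradientAt g ν x) (hν : ν ≠ 0) (hfx : f x = 0) (hgx : g x = 0)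
    (hfg : ∀ y, 0 < g y → 0 ≤ f y) : ∃ l : ℝ, 0 ≤ l ∧ a = l • ν := by
  refine exists_nonneg_smul_eq_of_forall_inner_nonneg hν fun ξ hξ ↦ ?_
  have hmin : IsLocalMinOn f {y | 0 < g y} x :=
    IsMinOn.localize fun y hy ↦ by simpa [hfx] using hfg y hy
  refine hmin.hasFDerivWithinAt_nonneg hf.hasFDerivAt.hasFDerivWithinAt
    (mem_posTangentConeAt_of_frequently_mem (Eventually.frequently ?_))
  have hslope := (hasDerivAt_comp_line (x := x) (e := ξ) (t := 0)
    (by simpa using hg.hasFDerivAt)).tendsto_slope_zero_right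
  filter_upwards [hslope.eventually_const_lt hξ, self_mem_nhdsWithin] with t ht htpos
  simpa [hgx, inv_pos.2 (Set.mem_Ioi.1 htpos)] using ht

end Calculus

section PositiveOperators

theorem abs_det_le_norm_pow_finrank {E : Type*} [NormedAddCommGroup E] [NormedSpace ℝ E]
    [FiniteDimensional ℝ E] (A : E →L[ℝ] E) : |A.det| ≤ ‖A‖ ^ Module.finrank ℝ E := by
  let _ : MeasurableSpace E := borel E
  have : BorelSpace E := ⟨rfl⟩
  have himage : A '' Metric.ball 0 1 ⊆ Metric.closedBall 0 ‖A‖ := by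
    rintro _ ⟨v, hv, rfl⟩
    simpa using A.le_of_opNorm_le_of_le le_rfl (mem_ball_zero_iff.1 hv).le
  have hmeasure := measure_mono (μ := Measure.addHaar) himage
  rw [Measure.addHaar_image_continuousLinearMap,
    Measure.addHaar_closedBall _ _ (norm_nonneg A)] at hmeasure
  exact (ENNReal.ofReal_le_ofReal_iff (by positivity)).1 <|
    (ENNReal.mul_le_mul_iff_left (Metric.measure_ball_pos _ _ one_pos).ne'
      measure_ball_lt_top.ne).1 hmeasure

variable {E : Type*} [NormedAddCommGroup E] [InnerProductSpace ℝ E] {A B : E →L[ℝ] E}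

theorem inner_apply_sq_le_of_isPositive (hA : A.IsPositive) (a b : E) :
    ⟪a, A b⟫ ^ 2 ≤ ⟪a, A a⟫ * ⟪b, A b⟫ := by
  let form : LinearMap.BilinForm ℝ E := (innerₗ E).compl₂ (A : E →ₗ[ℝ] E)
  refine LinearMap.BilinForm.apply_sq_le_of_symm form (fun v ↦ ?_) ⟨fun v w ↦ ?_⟩ a b
  · exact hA.inner_nonneg_right v
  · exact (hA.isSymmetric v w).symm.trans (real_inner_comm _ _)

variable [FiniteDimensional ℝ E]

theorem norm_apply_sq_le_trace_mul_of_isPositive (hA : A.IsPositive) (v : E) :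
    ‖A v‖ ^ 2 ≤ LinearMap.trace ℝ E A * ⟪v, A v⟫ := by
  let b := stdOrthonormalBasis ℝ E
  calc ‖A v‖ ^ 2 = ∑ i, ⟪b i, A v⟫ ^ 2 := by simp [← b.sum_sq_norm_inner_right]
    _ ≤ ∑ i, ⟪b i, A (b i)⟫ * ⟪v, A v⟫ :=
        Finset.sum_le_sum fun i _ ↦ inner_apply_sq_le_of_isPositive hA (b i) v
    _ = LinearMap.trace ℝ E A * ⟪v, A v⟫ := by
        rw [← Finset.sum_mul, LinearMap.trace_eq_sum_inner _ b]; rfl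

theorem continuous_trace : Continuous fun A : E →L[ℝ] E ↦ LinearMap.trace ℝ E A :=
  (LinearMap.trace ℝ E ∘ₗ ContinuousLinearMap.coeLM ℝ).continuous_of_finiteDimensional

theorem trace_nonneg_of_inner_nonneg (hA : ∀ v, 0 ≤ ⟪v, A v⟫) : 0 ≤ LinearMap.trace ℝ E A := by
  rw [LinearMap.trace_eq_sum_inner _ (stdOrthonormalBasis ℝ E)]
  exact Finset.sum_nonneg fun i _ ↦ hA _

theorem trace_le_of_inner_le {κ : ℝ} (hA : ∀ v, ⟪v, A v⟫ ≤ κ * ‖v‖ ^ 2) :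
    LinearMap.trace ℝ E A ≤ Module.finrank ℝ E * κ := by
  have h := trace_nonneg_of_inner_nonneg (A := κ • .id ℝ E - A) fun v ↦ by
    simpa [inner_sub_right, real_inner_smul_right] using hA v
  simpa [mul_comm] using h

theorem norm_apply_le_trace_mul_of_isPositive (hA : A.IsPositive) (v : E) :
    ‖A v‖ ≤ LinearMap.trace ℝ E A * ‖v‖ := by
  have htrace : 0 ≤ LinearMap.trace ℝ E A := trace_nonneg_of_inner_nonneg hA.inner_nonneg_right
  rcases (norm_nonneg (A v)).eq_or_lt with hv | hv
  · rw [← hv]; positivity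
  · refine le_of_mul_le_mul_right ?_ hv
    calc ‖A v‖ * ‖A v‖ = ‖A v‖ ^ 2 := (sq _).symm
      _ ≤ LinearMap.trace ℝ E A * ⟪v, A v⟫ := norm_apply_sq_le_trace_mul_of_isPositive hA v
      _ ≤ LinearMap.trace ℝ E A * (‖v‖ * ‖A v‖) := by gcongr; exact real_inner_le_norm v (A v)
      _ = LinearMap.trace ℝ E A * ‖v‖ * ‖A v‖ := by ring

theorem trace_sq_le_finrank_mul_trace_comp_self (hA : (A : E →ₗ[ℝ] E).IsSymmetric) :
    LinearMap.trace ℝ E A ^ 2 ≤ Module.finrank ℝ E * LinearMap.trace ℝ E (A ∘L A) := by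
  let b := stdOrthonormalBasis ℝ E
  rw [LinearMap.trace_eq_sum_inner _ b, LinearMap.trace_eq_sum_inner _ b]
  calc (∑ i, ⟪b i, A (b i)⟫) ^ 2 ≤ Module.finrank ℝ E * ∑ i, ⟪b i, A (b i)⟫ ^ 2 := by
        simpa using sq_sum_le_card_mul_sum_sq (s := Finset.univ) (f := fun i ↦ ⟪b i, A (b i)⟫)
    _ ≤ Module.finrank ℝ E * ∑ i, ⟪b i, A (A (b i))⟫ := by
        gcongr with i
        calc ⟪b i, A (b i)⟫ ^ 2 ≤ (‖b i‖ * ‖A (b i)‖) ^ 2 :=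
              sq_le_sq' (neg_le_of_abs_le (abs_real_inner_le_norm _ _)) (real_inner_le_norm _ _)
          _ = ⟪A (b i), A (b i)⟫ := by simp
          _ = ⟪b i, A (A (b i))⟫ := hA _ _

theorem le_trace_mul_inner_of_apply_eq_smul (hA : A.IsPositive) {b ν : E} {μ : ℝ} (hν : ‖ν‖ = 1)
    (hμ : 0 < μ) (hb : A b = μ • ν) : μ ≤ LinearMap.trace ℝ E A * ⟪b, ν⟫ := by
  have h := norm_apply_sq_le_trace_mul_of_isPositive hA b
  rw [hb, norm_smul, hν, real_inner_smul_right, mul_one, Real.norm_of_nonneg hμ.le] at h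
  nlinarith

end PositiveOperators

section LorentzOperator

variable {E : Type*} [NormedAddCommGroup E] [InnerProductSpace ℝ E]

/-- The Lorentz mean curvature operator in nondivergence form, multiplied by `(1 - ‖p‖²)^(3/2)`: for
`p = ∇u x` and `A = D²u x` it equals `(1 - ‖p‖²)^(3/2) M[u] x`. As a functional of `A` it is
elliptic for `‖p‖ < 1`. -/
def lorentzOp (p : E) (A : E →L[ℝ] E) : ℝ :=
  (1 - ‖p‖ ^ 2) * LinearMap.trace ℝ E A + ⟪p, A p⟫

variable {p : E} {A B : E →L[ℝ] E}

theorem lorentzOp_sub : lorentzOp p (A - B) = lorentzOp p A - lorentzOp p B := by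
  simp only [lorentzOp, ContinuousLinearMap.toLinearMap_sub, map_sub, sub_apply, inner_sub_right]
  ring

theorem lorentzOp_smul (r : ℝ) : lorentzOp p (r • A) = r * lorentzOp p A := by
  simp only [lorentzOp, ContinuousLinearMap.toLinearMap_smul, map_smul, smul_apply,
    real_inner_smul_right, smul_eq_mul]
  ring

theorem trace_mul_le_lorentzOp (hA : 0 ≤ ⟪p, A p⟫) :
    (1 - ‖p‖ ^ 2) * LinearMap.trace ℝ E A ≤ lorentzOp p A :=
  le_add_of_nonneg_right hA

theorem hasFDerivAt_sqrt_one_sub_norm_sq {G : E → E} {x : E} (hG : HasFDerivAt G A x)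
    (hx : ‖G x‖ < 1) :
    HasFDerivAt (fun y ↦ √(1 - ‖G y‖ ^ 2))
      (-(√(1 - ‖G x‖ ^ 2))⁻¹ • (innerSL ℝ (G x) ∘L A)) x := by
  have hpos : 0 < 1 - ‖G x‖ ^ 2 := by nlinarith [norm_nonneg (G x)]
  refine ((hG.norm_sq.const_sub 1).sqrt hpos.ne').congr_fderiv ?_
  ext e
  simp only [one_div, mul_inv_rev, smul_neg, neg_apply, smul_apply,
    ContinuousLinearMap.comp_apply, coe_innerSL_apply, nsmul_eq_mul, Nat.cast_ofNat, smul_eq_mul,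
    neg_smul, neg_inj]
  field_simp

theorem hasFDerivAt_inv_sqrt_smul {G : E → E} {x : E} (hG : HasFDerivAt G A x) (hx : ‖G x‖ < 1) :
    HasFDerivAt (fun y ↦ (√(1 - ‖G y‖ ^ 2))⁻¹ • G y) ((√(1 - ‖G x‖ ^ 2))⁻¹ • A +
      ((√(1 - ‖G x‖ ^ 2))⁻¹ ^ 3 • (innerSL ℝ (G x) ∘L A)).smulRight (G x)) x := by
  have hne : √(1 - ‖G x‖ ^ 2) ≠ 0 := (Real.sqrt_pos.2 (by nlinarith [norm_nonneg (G x)])).ne'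
  refine (((hasDerivAt_inv hne).comp_hasFDerivAt x
    (hasFDerivAt_sqrt_one_sub_norm_sq hG hx)).smul hG).congr_fderiv ?_
  ext e
  simp only [Function.comp_apply, neg_smul, smul_neg, neg_neg, add_apply, smul_apply,
    ContinuousLinearMap.smulRight_apply, ContinuousLinearMap.comp_apply, coe_innerSL_apply,
    smul_eq_mul, inv_pow, add_right_inj]
  field_simp

variable [FiniteDimensional ℝ E]

theorem lorentzOp_mono (hp : ‖p‖ ≤ 1) (hAB : ∀ e, ⟪e, A e⟫ ≤ ⟪e, B e⟫) :
    lorentzOp p A ≤ lorentzOp p B := by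
  have hform : ∀ e, 0 ≤ ⟪e, (B - A) e⟫ := fun e ↦ by
    simpa [inner_sub_right] using hAB e
  have htrace := trace_nonneg_of_inner_nonneg hform
  have hpos : 0 ≤ 1 - ‖p‖ ^ 2 := by nlinarith [norm_nonneg p]
  rw [← sub_nonneg, ← lorentzOp_sub]
  exact add_nonneg (mul_nonneg hpos htrace) (hform p)

theorem lorentzOp_le_trace (hA : A.IsPositive) : lorentzOp p A ≤ LinearMap.trace ℝ E A := by
  have hinner : ⟪p, A p⟫ ≤ LinearMap.trace ℝ E A * ‖p‖ ^ 2 :=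
    calc ⟪p, A p⟫ ≤ ‖p‖ * ‖A p‖ := real_inner_le_norm p (A p)
      _ ≤ ‖p‖ * (LinearMap.trace ℝ E A * ‖p‖) := by
          gcongr; exact norm_apply_le_trace_mul_of_isPositive hA p
      _ = LinearMap.trace ℝ E A * ‖p‖ ^ 2 := by ring
  rw [lorentzOp]
  linarith

theorem lorentzOp_id_le (hp : ‖p‖ ≤ 1) : lorentzOp p (.id ℝ E) ≤ Module.finrank ℝ E + 1 := by
  have hsq : ‖p‖ ^ 2 ≤ 1 := pow_le_one₀ (norm_nonneg p) hp
  have htrace : (1 - ‖p‖ ^ 2) * Module.finrank ℝ E ≤ Module.finrank ℝ E :=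
    mul_le_of_le_one_left (by positivity) (by linarith [sq_nonneg ‖p‖])
  simpa [lorentzOp] using add_le_add htrace hsq

theorem trace_fderiv_inv_sqrt_smul {G : E → E} {x : E} (hG : HasFDerivAt G A x) (hx : ‖G x‖ < 1) :
    LinearMap.trace ℝ E (fderiv ℝ (fun y ↦ (√(1 - ‖G y‖ ^ 2))⁻¹ • G y) x) * √(1 - ‖G x‖ ^ 2) ^ 3 =
      lorentzOp (G x) A := by
  have hpos : 0 < 1 - ‖G x‖ ^ 2 := by nlinarith [norm_nonneg (G x)]
  have hne : √(1 - ‖G x‖ ^ 2) ≠ 0 := (Real.sqrt_pos.2 hpos).ne'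
  rw [(hasFDerivAt_inv_sqrt_smul hG hx).fderiv]
  simp only [inv_pow, ContinuousLinearMap.toLinearMap_add, ContinuousLinearMap.toLinearMap_smul,
    ContinuousLinearMap.coe_smulRight, ContinuousLinearMap.toLinearMap_comp,
    ContinuousLinearMap.toLinearMap_innerSL_apply, map_add, map_smul, smul_eq_mul,
    LinearMap.trace_smulRight, LinearMap.smul_apply, LinearMap.coe_comp, coe_innerₛₗ_apply,
    ContinuousLinearMap.coe_coe, Function.comp_apply, lorentzOp]
  field_simp
  rw [Real.sq_sqrt hpos.le]

theorem hasDerivAt_lorentzOp {γ : ℝ → E} {γ' : E} {α : ℝ → E →L[ℝ] E} {α' : E →L[ℝ] E} {t : ℝ}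
    (hγ : HasDerivAt γ γ' t) (hα : HasDerivAt α α' t) (hsymm : (α t : E →ₗ[ℝ] E).IsSymmetric) :
    HasDerivAt (fun s ↦ lorentzOp (γ s) (α s))
      (lorentzOp (γ t) α' - 2 * ⟪γ t, γ'⟫ * LinearMap.trace ℝ E (α t) + 2 * ⟪α t (γ t), γ'⟫) t := by
  let tr : (E →L[ℝ] E) →L[ℝ] ℝ :=
    (LinearMap.trace ℝ E ∘ₗ ContinuousLinearMap.coeLM ℝ).toContinuousLinearMap
  have htrace : HasDerivAt (fun s ↦ LinearMap.trace ℝ E (α s)) (LinearMap.trace ℝ E α') t :=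
    tr.hasFDerivAt.comp_hasDerivAt t hα
  refine (((hγ.norm_sq.const_sub 1).mul htrace).add (hγ.inner ℝ (hα.clm_apply hγ))).congr_deriv ?_
  have h : ⟪γ t, α t γ'⟫ = ⟪α t (γ t), γ'⟫ := (hsymm _ _).symm
  simp only [lorentzOp, inner_add_right, h, real_inner_comm (α t (γ t)) γ']
  ring

theorem lorentzOp_fderiv_apply {G : E → E} {A : E → E →L[ℝ] E} {B : E →L[ℝ] E →L[ℝ] E} {x : E}
    {c : ℝ} (hG : HasFDerivAt G (A x) x) (hA : HasFDerivAt A B x)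
    (hsymm : (A x : E →ₗ[ℝ] E).IsSymmetric) (hx : ‖G x‖ < 1)
    (heq : ∀ᶠ y in 𝓝 x, lorentzOp (G y) (A y) = c * √(1 - ‖G y‖ ^ 2) ^ 3) (b : E) :
    lorentzOp (G x) (B b) = 2 * ⟪G x, A x b⟫ * LinearMap.trace ℝ E (A x) -
      2 * ⟪A x (G x), A x b⟫ - 3 * c * √(1 - ‖G x‖ ^ 2) * ⟪G x, A x b⟫ := by
  have hpos : 0 < √(1 - ‖G x‖ ^ 2) := Real.sqrt_pos.2 (by nlinarith [norm_nonneg (G x)])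
  have hline : Tendsto (fun t : ℝ ↦ x + t • b) (𝓝 0) (𝓝 x) :=
    Continuous.tendsto' (by fun_prop) 0 x (by simp)
  have hleft := hasDerivAt_lorentzOp (γ := fun t : ℝ ↦ G (x + t • b))
    (α := fun t : ℝ ↦ A (x + t • b)) (t := 0)
    (hasDerivAt_comp_line (by simpa using hG)) (hasDerivAt_comp_line (by simpa using hA))
    (by simpa using hsymm)
  have hright := ((hasDerivAt_comp_line (x := x) (e := b) (t := 0)
    (by simpa using hasFDerivAt_sqrt_one_sub_norm_sq hG hx)).pow 3).const_mul c
  have hderiv := (hleft.congr_of_eventuallyEq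
    ((hline.eventually heq).mono fun t ht ↦ ht.symm)).unique hright
  simp only [zero_smul, add_zero, Nat.cast_ofNat, Nat.add_one_sub_one, neg_apply, smul_apply,
    ContinuousLinearMap.comp_apply, coe_innerSL_apply, smul_eq_mul, mul_neg] at hderiv
  field_simp [hpos.ne'] at hderiv
  linarith

theorem MOp_mul_sqrt_pow {n : ℕ} {u : EuclideanSpace ℝ (Fin n) → ℝ} {x : EuclideanSpace ℝ (Fin n)}
    (hu : ContDiffAt ℝ 2 u x) (hx : ‖gradient u x‖ < 1) :
    MOp n u x * √(1 - ‖gradient u x‖ ^ 2) ^ 3 =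
      lorentzOp (gradient u x) (fderiv ℝ (gradient u) x) := by
  rw [← trace_fderiv_inv_sqrt_smul (hasFDerivAt_gradient hu) hx]
  congr 1
  have hdiff := (hasFDerivAt_inv_sqrt_smul (hasFDerivAt_gradient hu) hx).differentiableAt
  rw [LinearMap.trace_eq_sum_inner _ (EuclideanSpace.basisFun (Fin n) ℝ), MOp]
  refine Finset.sum_congr rfl fun i _ ↦ ?_
  have hcoord : (fun y ↦ fderiv ℝ u y (ev n i) / √(1 - ‖gradient u y‖ ^ 2)) =
      fun y ↦ ⟪ev n i, (√(1 - ‖gradient u y‖ ^ 2))⁻¹ • gradient u y⟫ := by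
    ext y
    rw [real_inner_smul_right, real_inner_comm, inner_gradient_left, mul_comm, div_eq_mul_inv]
  rw [hcoord, ((hasFDerivAt_const (ev n i) x).inner ℝ hdiff.hasFDerivAt).fderiv]
  simp [ev]

end LorentzOperator

theorem apply_notMem_image_of_mem_frontier {X Y : Type*} [TopologicalSpace X] [T2Space X]
    [TopologicalSpace Y] {f : X → Y} {s : Set X} {x : X} (hs : IsOpen s) (hinj : Set.InjOn f s)
    (hopen : ∀ y ∈ s, 𝓝 (f y) ≤ map f (𝓝 y)) (hx : x ∈ frontier s) (hf : ContinuousAt f x) :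
    f x ∉ f '' s := by
  rintro ⟨y, hy, hyx⟩
  rw [hs.frontier_eq] at hx
  have hne : y ≠ x := fun h ↦ hx.2 (h ▸ hy)
  obtain ⟨V, W, hV, hW, hVW⟩ := t2_separation_nhds hne
  have himage : f '' (V ∩ s) ∈ 𝓝 (f x) :=
    hyx ▸ hopen y hy (image_mem_map (inter_mem hV (hs.mem_nhds hy)))
  obtain ⟨z, ⟨hzW, z', ⟨hz'V, hz's⟩, hz'z⟩, hzs⟩ :=
    mem_closure_iff_nhds.1 hx.1 _ (inter_mem hW (hf himage))
  exact Set.disjoint_left.1 hVW (hinj hz's hzs hz'z ▸ hz'V) hzW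

theorem exists_inner_fderiv_gradient_le {E : Type*} [NormedAddCommGroup E] [InnerProductSpace ℝ E]
    [ProperSpace E] {f : E → ℝ} {z : E} {r L κ : ℝ} (hr : 0 < r)
    (hf : ∀ y ∈ Metric.closedBall z r, ContDiffAt ℝ 2 f y)
    (hL : ∀ y ∈ Metric.closedBall z r, ‖gradient f y‖ ≤ L) (hκ : 2 * L < κ * r) :
    ∃ x ∈ Metric.ball z r, ∀ e, ⟪e, fderiv ℝ (gradient f) x e⟫ ≤ κ * ‖e‖ ^ 2 := by
  let φ : E → ℝ := fun y ↦ κ / 2 * ‖y - z‖ ^ 2 - f y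
  have hφ : ContinuousOn φ (Metric.closedBall z r) :=
    ContinuousOn.sub (by fun_prop) fun y hy ↦ (hf y hy).continuousAt.continuousWithinAt
  have hz : z ∈ Metric.closedBall z r := Metric.mem_closedBall_self hr.le
  obtain ⟨x, hx, hmin⟩ := (isCompact_closedBall z r).exists_isMinOn ⟨z, hz⟩ hφ
  have hx_ball : x ∈ Metric.ball z r := by
    refine Metric.mem_ball.2 (lt_of_le_of_ne hx fun hdist ↦ ?_)
    have hnorm : ‖x - z‖ = r := by rw [← dist_eq_norm, hdist]
    have hlip : ‖f x - f z‖ ≤ L * ‖x - z‖ :=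
      (convex_closedBall z r).norm_image_sub_le_of_norm_fderiv_le (𝕜 := ℝ)
        (fun y hy ↦ (hf y hy).differentiableAt two_ne_zero)
        (fun y hy ↦ by simpa [← toDual_gradient] using hL y hy) hz hx
    have hφ_le : φ x ≤ φ z := hmin hz
    simp only [φ, hnorm, sub_self, norm_zero] at hφ_le
    rw [hnorm] at hlip
    nlinarith [le_of_abs_le hlip]
  have hlocal : IsLocalMin φ x := hmin.isLocalMin (Metric.closedBall_mem_nhds_of_mem hx_ball)
  have hgrad : ∀ᶠ y in 𝓝 x, HasGradientAt φ (κ • (y - z) - gradient f y) y := by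
    filter_upwards [(hf x hx).eventually (by simp)] with y hy
    have hsq := (((hasFDerivAt_id y).sub_const z).norm_sq.const_mul (κ / 2)).sub
      (hy.differentiableAt two_ne_zero).hasGradientAt.hasFDerivAt
    refine hasGradientAt_iff_hasFDerivAt.2 (hsq.congr_fderiv ?_)
    ext e
    simp only [id_eq, map_sub, ContinuousLinearMap.comp_id, toDual_gradient, sub_apply, smul_apply,
      coe_innerSL_apply, nsmul_eq_mul, Nat.cast_ofNat, smul_eq_mul, map_smul,
      InnerProductSpace.toDual_apply_apply, sub_left_inj]
    ring
  have hhess := (((hasFDerivAt_id x).sub_const z).const_smul κ).sub (hasFDerivAt_gradient (hf x hx))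
  refine ⟨x, hx_ball, fun e ↦ ?_⟩
  simpa [inner_sub_right, real_inner_smul_right] using
    inner_nonneg_of_isLocalMin_of_hasGradientAt hlocal hgrad hhess e

namespace IsSol

variable {n : ℕ} {Ω Ω' : Set (EuclideanSpace ℝ (Fin n))} {u : EuclideanSpace ℝ (Fin n) → ℝ} {c : ℝ}
  {x : EuclideanSpace ℝ (Fin n)}

theorem contDiffAt (hu : IsSol n Ω Ω' u c) (hx : x ∈ closure Ω) {m : ℕ} : ContDiffAt ℝ m u x := by
  obtain ⟨U, hU, hΩU, hsmooth⟩ := hu.1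
  exact (hsmooth.contDiffAt (hU.mem_nhds (hΩU hx))).of_le (by exact_mod_cast le_top)

theorem norm_gradient_lt_one (hu : IsSol n Ω Ω' u c) (hx : x ∈ closure Ω) : ‖gradient u x‖ < 1 :=
  hu.2.1 x hx

theorem bijOn_gradient (hu : IsSol n Ω Ω' u c) : Set.BijOn (gradient u) Ω Ω' :=
  hu.2.2.2.1

theorem isPositive_hessian (hu : IsSol n Ω Ω' u c) (hx : x ∈ closure Ω) :
    (fderiv ℝ (gradient u) x).IsPositive := by
  refine (ContinuousLinearMap.isPositive_iff _).2
    ⟨isSymmetric_fderiv_gradient (hu.contDiffAt hx (m := 2)), fun ξ ↦ ?_⟩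
  rw [real_inner_comm]
  rcases eq_or_ne ξ 0 with rfl | hξ
  · simp
  · exact (hu.2.2.1 x hx ξ hξ).le

theorem continuousOn_gradient (hu : IsSol n Ω Ω' u c) : ContinuousOn (gradient u) (closure Ω) :=
  fun _ hx ↦ (contDiffAt_gradient (m := 0) (hu.contDiffAt hx (m := 1))
    (by norm_num)).continuousAt.continuousWithinAt

theorem map_gradient_nhds (hu : IsSol n Ω Ω' u c) (hx : x ∈ closure Ω) :
    map (gradient u) (𝓝 x) = 𝓝 (gradient u x) := by
  have hstrict := (contDiffAt_gradient (m := 1) (hu.contDiffAt hx (m := 2))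
    (by norm_num)).hasStrictFDerivAt one_ne_zero
  refine hstrict.map_nhds_eq_of_surj (LinearMap.range_eq_top.2 (LinearMap.surjective_of_injective
    ((injective_iff_map_eq_zero _).2 fun ξ hξ ↦ ?_)))
  by_contra hne
  have hpos := hu.2.2.1 x hx ξ hne
  rw [ContinuousLinearMap.coe_coe] at hξ
  rw [hξ, inner_zero_right] at hpos
  exact hpos.false

theorem gradient_mem_frontier (hu : IsSol n Ω Ω' u c) (hΩ : IsOpen Ω) (hΩ' : IsOpen Ω')
    (hx : x ∈ frontier Ω) : gradient u x ∈ frontier Ω' := by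
  have hx_closure := frontier_subset_closure hx
  have hcont := (contDiffAt_gradient (m := 0) (hu.contDiffAt hx_closure (m := 1))
    (by norm_num)).continuousAt
  rw [hΩ'.frontier_eq, Set.mem_sdiff, ← hu.bijOn_gradient.image_eq]
  exact ⟨hu.continuousOn_gradient.image_closure ⟨x, hx_closure, rfl⟩,
    apply_notMem_image_of_mem_frontier hΩ hu.bijOn_gradient.injOn
      (fun y hy ↦ (hu.map_gradient_nhds (subset_closure hy)).ge) hx hcont⟩

theorem lorentzOp_eq (hu : IsSol n Ω Ω' u c) (hx : x ∈ Ω) :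
    lorentzOp (gradient u x) (fderiv ℝ (gradient u) x) = c * √(1 - ‖gradient u x‖ ^ 2) ^ 3 := by
  rw [← MOp_mul_sqrt_pow (hu.contDiffAt (subset_closure hx) (m := 2))
    (hu.norm_gradient_lt_one (subset_closure hx)), hu.2.2.2.2 x hx]

theorem trace_hessian_nonneg (hu : IsSol n Ω Ω' u c) (hx : x ∈ closure Ω) :
    0 ≤ LinearMap.trace ℝ _ (fderiv ℝ (gradient u) x).toLinearMap :=
  trace_nonneg_of_inner_nonneg (hu.isPositive_hessian hx).inner_nonneg_right

theorem le_trace_hessian (hu : IsSol n Ω Ω' u c) (hx : x ∈ Ω) :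
    c * √(1 - ‖gradient u x‖ ^ 2) ^ 3 ≤
      LinearMap.trace ℝ _ (fderiv ℝ (gradient u) x).toLinearMap :=
  (hu.lorentzOp_eq hx).symm.trans_le
    (lorentzOp_le_trace (hu.isPositive_hessian (subset_closure hx)))

theorem trace_hessian_le_mul (hu : IsSol n Ω Ω' u c) (hx : x ∈ Ω) :
    LinearMap.trace ℝ _ (fderiv ℝ (gradient u) x).toLinearMap ≤ c * √(1 - ‖gradient u x‖ ^ 2) := by
  have hpos : 0 < 1 - ‖gradient u x‖ ^ 2 := by
    nlinarith [hu.norm_gradient_lt_one (subset_closure hx), norm_nonneg (gradient u x)]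
  have hle := trace_mul_le_lorentzOp
    ((hu.isPositive_hessian (subset_closure hx)).inner_nonneg_right (gradient u x))
  rw [hu.lorentzOp_eq hx] at hle
  refine le_of_mul_le_mul_left (hle.trans_eq ?_) hpos
  rw [← Real.sq_sqrt hpos.le, Real.sqrt_sq (Real.sqrt_nonneg _)]
  ring

theorem const_nonneg (hu : IsSol n Ω Ω' u c) (hx : x ∈ Ω) : 0 ≤ c := by
  have hpos : 0 < 1 - ‖gradient u x‖ ^ 2 := by
    nlinarith [hu.norm_gradient_lt_one (subset_closure hx), norm_nonneg (gradient u x)]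
  exact nonneg_of_mul_nonneg_left
    ((hu.trace_hessian_nonneg (subset_closure hx)).trans (hu.trace_hessian_le_mul hx))
    (Real.sqrt_pos.2 hpos)

theorem trace_hessian_le (hu : IsSol n Ω Ω' u c) (hx : x ∈ closure Ω) :
    LinearMap.trace ℝ _ (fderiv ℝ (gradient u) x).toLinearMap ≤ c := by
  have hcont : ContinuousOn
      (fun y ↦ LinearMap.trace ℝ _ (fderiv ℝ (gradient u) y).toLinearMap) (closure Ω) :=
    fun y hy ↦ continuous_trace.continuousAt.comp_continuousWithinAt
      (((contDiffAt_gradient (m := 1) (hu.contDiffAt hy (m := 2)) (by norm_num)).fderiv_right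
        (m := 0) (by norm_num)).continuousAt.continuousWithinAt)
  refine le_on_closure (fun y hy ↦ ?_) hcont continuousOn_const hx
  refine (hu.trace_hessian_le_mul hy).trans (mul_le_of_le_one_right (hu.const_nonneg hy) ?_)
  exact Real.sqrt_le_one.2 (by linarith [sq_nonneg ‖gradient u y‖])

theorem norm_hessian_apply_le (hu : IsSol n Ω Ω' u c) (hx : x ∈ closure Ω)
    (v : EuclideanSpace ℝ (Fin n)) : ‖fderiv ℝ (gradient u) x v‖ ≤ c * ‖v‖ :=
  (norm_apply_le_trace_mul_of_isPositive (hu.isPositive_hessian hx) v).trans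
    (mul_le_mul_of_nonneg_right (hu.trace_hessian_le hx) (norm_nonneg v))

theorem volume_le (hu : IsSol n Ω Ω' u c) (hΩ : IsOpen Ω) :
    volume Ω' ≤ ENNReal.ofReal c ^ n * volume Ω := by
  have hderiv : ∀ x ∈ Ω, HasFDerivWithinAt (gradient u) (fderiv ℝ (gradient u) x) Ω x :=
    fun x hx ↦ (hasFDerivAt_gradient (hu.contDiffAt (subset_closure hx)
      (m := 2))).hasFDerivWithinAt
  have hdet : ∀ x ∈ Ω, |(fderiv ℝ (gradient u) x).det| ≤ c ^ n := fun x hx ↦ by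
    have hnorm := ContinuousLinearMap.opNorm_le_bound _ (hu.const_nonneg hx)
      (hu.norm_hessian_apply_le (subset_closure hx))
    simpa using (abs_det_le_norm_pow_finrank _).trans (pow_le_pow_left₀ (norm_nonneg _) hnorm _)
  calc volume Ω' = volume (gradient u '' Ω) := by rw [hu.bijOn_gradient.image_eq]
    _ ≤ ∫⁻ x in Ω, ENNReal.ofReal |(fderiv ℝ (gradient u) x).det| :=
        addHaar_image_le_lintegral_abs_det_fderiv volume hΩ.measurableSet hderiv
    _ ≤ ∫⁻ _ in Ω, ENNReal.ofReal c ^ n := by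
        refine setLIntegral_mono' hΩ.measurableSet fun x hx ↦ ?_
        rw [← ENNReal.ofReal_pow (hu.const_nonneg hx)]
        exact ENNReal.ofReal_le_ofReal (hdet x hx)
    _ = ENNReal.ofReal c ^ n * volume Ω := setLIntegral_const _ _

theorem exists_pos_le_const (hn : n ≠ 0) (hΩ : IsOpen Ω) (hΩb : Bornology.IsBounded Ω)
    (hΩ' : IsOpen Ω') (hne : Ω'.Nonempty) : ∃ k, 0 < k ∧ ∀ u c, IsSol n Ω Ω' u c → k ≤ c := by
  have hsmall : Tendsto (fun k : ℝ ↦ ENNReal.ofReal k ^ n * volume Ω) (𝓝[>] 0) (𝓝 0) := by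
    have hpow : Tendsto (fun k : ℝ ↦ ENNReal.ofReal k ^ n) (𝓝 0) (𝓝 0) :=
      ((ENNReal.continuous_pow n).comp ENNReal.continuous_ofReal).tendsto' _ _ (by simp [hn])
    simpa using (ENNReal.Tendsto.mul_const hpow (Or.inr hΩb.measure_lt_top.ne)).mono_left
      nhdsWithin_le_nhds
  obtain ⟨k, hk, hk_pos⟩ := ((hsmall.eventually_lt_const (hΩ'.measure_pos volume hne)).and
    self_mem_nhdsWithin).exists
  refine ⟨k, hk_pos, fun u c hu ↦ ?_⟩
  by_contra! hck
  refine hk.not_ge ((hu.volume_le hΩ).trans ?_)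
  gcongr

theorem exists_const_le (hΩ : IsOpen Ω) (hne : Ω.Nonempty) {s : ℝ} (hs : 0 < s)
    (hΩ' : ∀ p ∈ Ω', s ≤ 1 - ‖p‖ ^ 2) : ∃ K, 0 < K ∧ ∀ u c, IsSol n Ω Ω' u c → c ≤ K := by
  obtain ⟨z, hz⟩ := hne
  obtain ⟨r, hr, hball⟩ := Metric.nhds_basis_closedBall.mem_iff.1 (hΩ.mem_nhds hz)
  refine ⟨n * (3 / r) / √s ^ 3 + 1, by positivity, fun u c hu ↦ ?_⟩
  obtain ⟨x, hx, hhess⟩ := exists_inner_fderiv_gradient_le (L := 1) (κ := 3 / r) hr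
    (fun y hy ↦ hu.contDiffAt (subset_closure (hball hy)) (m := 2))
    (fun y hy ↦ (hu.norm_gradient_lt_one (subset_closure (hball hy))).le)
    (by rw [div_mul_cancel₀ _ hr.ne']; norm_num)
  have hxΩ : x ∈ Ω := hball (Metric.ball_subset_closedBall hx)
  have hsqrt : √s ≤ √(1 - ‖gradient u x‖ ^ 2) :=
    Real.sqrt_le_sqrt (hΩ' _ (hu.bijOn_gradient.mapsTo hxΩ))
  have hupper : c * √s ^ 3 ≤ n * (3 / r) :=
    calc c * √s ^ 3 ≤ c * √(1 - ‖gradient u x‖ ^ 2) ^ 3 := by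
          gcongr; exact hu.const_nonneg hxΩ
      _ ≤ _ := hu.le_trace_hessian hxΩ
      _ ≤ n * (3 / r) := by simpa using trace_le_of_inner_le hhess
  exact ((le_div_iff₀ (by positivity)).2 hupper).trans (by linarith)

end IsSol

theorem hasGradientAt_comp_sub_const_mul {E : Type*} [NormedAddCommGroup E]
    [InnerProductSpace ℝ E] [CompleteSpace E] {u g h : E → ℝ} {x : E} {ε : ℝ}
    (hh : DifferentiableAt ℝ h (gradient u x)) (hu : ContDiffAt ℝ 2 u x)
    (hg : DifferentiableAt ℝ g x) :
    HasGradientAt (fun y ↦ h (gradient u y) - ε * g y)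
      (fderiv ℝ (gradient u) x (gradient h (gradient u x)) - ε • gradient g x) x := by
  have hcomp := hasGradientAt_comp hh.hasGradientAt (hasFDerivAt_gradient hu)
    (isSymmetric_fderiv_gradient hu)
  refine hasGradientAt_iff_hasFDerivAt.2 ((hcomp.hasFDerivAt.sub
    (hg.hasGradientAt.hasFDerivAt.const_mul ε)).congr_fderiv ?_)
  simp only [map_sub, map_smul]

theorem inner_third_deriv_nonneg_of_isLocalMin {E : Type*} [NormedAddCommGroup E]
    [InnerProductSpace ℝ E] [CompleteSpace E] {u g h : E → ℝ} {x : E} {ε : ℝ}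
    (hu : ContDiffAt ℝ 3 u x) (hh : ContDiffAt ℝ 2 h (gradient u x)) (hg : ContDiffAt ℝ 2 g x)
    (hmin : IsLocalMin (fun y ↦ h (gradient u y) - ε * g y) x) :
    fderiv ℝ (gradient u) x (gradient h (gradient u x)) = ε • gradient g x ∧
      ∀ e, 0 ≤ ⟪e, fderiv ℝ (fderiv ℝ (gradient u)) x (gradient h (gradient u x)) e⟫ +
        ⟪fderiv ℝ (gradient u) x e,
          fderiv ℝ (gradient h) (gradient u x) (fderiv ℝ (gradient u) x e)⟫ -
        ε * ⟪e, fderiv ℝ (gradient g) x e⟫ := by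
  have hu₂ : ContDiffAt ℝ 2 u x := hu.of_le (by norm_num)
  have hG : ContDiffAt ℝ 2 (gradient u) x := contDiffAt_gradient hu (by norm_num)
  have hd2G : HasFDerivAt (fderiv ℝ (gradient u)) (fderiv ℝ (fderiv ℝ (gradient u)) x) x :=
    ((hG.fderiv_right (m := 1) (by norm_num)).differentiableAt one_ne_zero).hasFDerivAt
  have hgrad : ∀ᶠ y in 𝓝 x, HasGradientAt (fun y ↦ h (gradient u y) - ε * g y)
      (fderiv ℝ (gradient u) y (gradient h (gradient u y)) - ε • gradient g y) y := by
    filter_upwards [hu₂.eventually (by simp), hg.eventually (by simp),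
      hG.continuousAt.eventually (hh.eventually (by simp))] with y huy hgy hhy
    exact hasGradientAt_comp_sub_const_mul (hhy.differentiableAt two_ne_zero) huy
      (hgy.differentiableAt two_ne_zero)
  have hhess := (hd2G.clm_apply ((hasFDerivAt_gradient hh).comp x (hasFDerivAt_gradient hu₂))).sub
    ((hasFDerivAt_gradient hg).const_smul ε)
  have hcrit := hmin.hasFDerivAt_eq_zero hgrad.self_of_nhds.hasFDerivAt
  refine ⟨sub_eq_zero.1 ((InnerProductSpace.toDual ℝ E).map_eq_zero_iff.1 hcrit), fun e ↦ ?_⟩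
  have hsecond := inner_nonneg_of_isLocalMin_of_hasGradientAt hmin hgrad hhess e
  have hsymm : ⟪fderiv ℝ (gradient u) x e, _⟫ = ⟪e, fderiv ℝ (gradient u) x _⟫ :=
    isSymmetric_fderiv_gradient hu₂ e
      (fderiv ℝ (gradient h) (gradient u x) (fderiv ℝ (gradient u) x e))
  rw [hsymm, hG.isSymmSndFDerivAt (by simp) (gradient h (gradient u x)) e, ← inner_add_right,
    ← real_inner_smul_right, ← inner_sub_right, add_comm]
  simpa using hsecond

namespace IsSol

variable {n : ℕ} {Ω Ω' : Set (EuclideanSpace ℝ (Fin n))} {u g h : EuclideanSpace ℝ (Fin n) → ℝ}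
  {c s θ ε k K M₁ M₂ : ℝ} {x : EuclideanSpace ℝ (Fin n)}

theorem le_lorentzOp_hessian_comp_self (hu : IsSol n Ω Ω' u c) (hx : x ∈ Ω) (hs : 0 < s)
    (hΩ' : ∀ p ∈ Ω', s ≤ 1 - ‖p‖ ^ 2) :
    c ^ 2 * s ^ 4 ≤ n * lorentzOp (gradient u x)
      (fderiv ℝ (gradient u) x ∘L fderiv ℝ (gradient u) x) := by
  set A := fderiv ℝ (gradient u) x
  have hc := hu.const_nonneg hx
  have hpos : s ≤ 1 - ‖gradient u x‖ ^ 2 := hΩ' _ (hu.bijOn_gradient.mapsTo hx)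
  have hA := hu.isPositive_hessian (subset_closure hx)
  have htrace : c * √s ^ 3 ≤ LinearMap.trace ℝ _ A.toLinearMap :=
    le_trans (by gcongr) (hu.le_trace_hessian hx)
  have hinner : 0 ≤ ⟪gradient u x, (A ∘L A) (gradient u x)⟫ :=
    real_inner_self_nonneg.trans_eq (hA.isSymmetric _ _)
  have hsqrt : √s ^ 2 = s := Real.sq_sqrt hs.le
  have htrace_comp : 0 ≤ LinearMap.trace ℝ _ (A ∘L A).toLinearMap :=
    trace_nonneg_of_inner_nonneg fun v ↦ real_inner_self_nonneg.trans_eq (hA.isSymmetric v (A v))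
  calc c ^ 2 * s ^ 4 = s * (c * √s ^ 3) ^ 2 := by
        rw [← hsqrt, Real.sqrt_sq (Real.sqrt_nonneg s)]; ring
    _ ≤ s * LinearMap.trace ℝ _ A.toLinearMap ^ 2 := by gcongr
    _ ≤ s * (n * LinearMap.trace ℝ _ (A ∘L A).toLinearMap) := by
        gcongr
        simpa using trace_sq_le_finrank_mul_trace_comp_self hA.isSymmetric
    _ = n * (s * LinearMap.trace ℝ _ (A ∘L A).toLinearMap) := by ring
    _ ≤ n * lorentzOp (gradient u x) (A ∘L A) := by
        gcongr
        exact le_trans (by gcongr) (trace_mul_le_lorentzOp hinner)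

theorem lorentzOp_third_deriv_le (hu : IsSol n Ω Ω' u c) (hΩ : IsOpen Ω) (hx : x ∈ Ω)
    (b : EuclideanSpace ℝ (Fin n)) :
    lorentzOp (gradient u x) (fderiv ℝ (fderiv ℝ (gradient u)) x b) ≤
      7 * c * ‖fderiv ℝ (gradient u) x b‖ := by
  have hx' : x ∈ closure Ω := subset_closure hx
  have hp := (hu.norm_gradient_lt_one hx').le
  have hc := hu.const_nonneg hx
  have hG : ContDiffAt ℝ 2 (gradient u) x :=
    contDiffAt_gradient (hu.contDiffAt hx' (m := 3)) (by norm_num)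
  rw [lorentzOp_fderiv_apply (hasFDerivAt_gradient (hu.contDiffAt hx' (m := 2)))
    ((hG.fderiv_right (m := 1) (by norm_num)).differentiableAt one_ne_zero).hasFDerivAt
    (hu.isPositive_hessian hx').isSymmetric (hu.norm_gradient_lt_one hx')
    ((hΩ.eventually_mem hx).mono fun y hy ↦ hu.lorentzOp_eq hy)]
  set p := gradient u x
  set A := fderiv ℝ (gradient u) x
  have hpAb : |⟪p, A b⟫| ≤ ‖A b‖ :=
    (abs_real_inner_le_norm _ _).trans (mul_le_of_le_one_left (norm_nonneg _) hp)
  have htrace : ⟪p, A b⟫ * LinearMap.trace ℝ _ A.toLinearMap ≤ ‖A b‖ * c :=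
    mul_le_mul ((le_abs_self _).trans hpAb) (hu.trace_hessian_le hx') (hu.trace_hessian_nonneg hx')
      (norm_nonneg _)
  have hApAb : |⟪A p, A b⟫| ≤ c * ‖A b‖ := by
    refine (abs_real_inner_le_norm _ _).trans ?_
    gcongr
    exact (hu.norm_hessian_apply_le hx' p).trans (mul_le_of_le_one_right hc hp)
  have hsqrt : |√(1 - ‖p‖ ^ 2) * ⟪p, A b⟫| ≤ ‖A b‖ := by
    rw [abs_mul, abs_of_nonneg (Real.sqrt_nonneg _)]
    refine (mul_le_of_le_one_left (abs_nonneg _) (Real.sqrt_le_one.2 ?_)).trans hpAb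
    linarith [sq_nonneg ‖p‖]
  have hc_sqrt := mul_le_mul_of_nonneg_left (neg_le_of_abs_le hsqrt) hc
  linarith [neg_le_of_abs_le hApAb]

theorem le_of_isLocalMin (hu : IsSol n Ω Ω' u c) (hΩ : IsOpen Ω) (hx : x ∈ Ω) (hs : 0 < s)
    (hΩ' : ∀ p ∈ Ω', s ≤ 1 - ‖p‖ ^ 2) (hh : ContDiff ℝ 2 h) (hg : ContDiff ℝ 2 g)
    (hθ : 0 < θ) (hhess : ∀ p ξ, ⟪ξ, fderiv ℝ (gradient h) p ξ⟫ ≤ -θ * ‖ξ‖ ^ 2) (hε : 0 < ε)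
    (hM₁ : ‖gradient g x‖ ≤ M₁) (hM₂ : ‖fderiv ℝ (gradient g) x‖ ≤ M₂)
    (hmin : IsLocalMin (fun y ↦ h (gradient u y) - ε * g y) x) :
    θ * (c ^ 2 * s ^ 4) ≤ ε * (n * (7 * c * M₁ + (n + 1) * M₂)) := by
  have hx' : x ∈ closure Ω := subset_closure hx
  obtain ⟨hcrit, hsecond⟩ := inner_third_deriv_nonneg_of_isLocalMin
    (hu.contDiffAt hx' (m := 3)) hh.contDiffAt hg.contDiffAt hmin
  set A := fderiv ℝ (gradient u) x
  set b := gradient h (gradient u x)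
  have hform : ∀ e, ⟪e, (θ • (A ∘L A) - (ε * M₂) • .id ℝ _) e⟫ ≤
      ⟪e, fderiv ℝ (fderiv ℝ (gradient u)) x b e⟫ := fun e ↦ by
    have hA : ⟪e, A (A e)⟫ = ‖A e‖ ^ 2 := by
      rw [← real_inner_self_eq_norm_sq]
      exact ((hu.isPositive_hessian hx').isSymmetric e (A e)).symm
    have hD2g : |⟪e, fderiv ℝ (gradient g) x e⟫| ≤ M₂ * ‖e‖ ^ 2 :=
      calc |⟪e, fderiv ℝ (gradient g) x e⟫| ≤ ‖e‖ * ‖fderiv ℝ (gradient g) x e‖ :=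
            abs_real_inner_le_norm _ _
        _ ≤ ‖e‖ * (M₂ * ‖e‖) := by gcongr; exact (fderiv ℝ (gradient g) x).le_of_opNorm_le hM₂ e
        _ = M₂ * ‖e‖ ^ 2 := by ring
    have hεD2g := mul_le_mul_of_nonneg_left (neg_le_of_abs_le hD2g) hε.le
    simp only [sub_apply, smul_apply, ContinuousLinearMap.comp_apply, ContinuousLinearMap.id_apply,
      inner_sub_right, real_inner_smul_right, hA, real_inner_self_eq_norm_sq]
    linarith [hsecond e, hhess (gradient u x) (A e)]
  have hL := (lorentzOp_mono (hu.norm_gradient_lt_one hx').le hform).trans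
    (hu.lorentzOp_third_deriv_le hΩ hx b)
  rw [lorentzOp_sub, lorentzOp_smul, lorentzOp_smul, hcrit, norm_smul,
    Real.norm_of_nonneg hε.le] at hL
  have hquad := hu.le_lorentzOp_hessian_comp_self hx hs hΩ'
  have hid := lorentzOp_id_le (hu.norm_gradient_lt_one hx').le
  rw [finrank_euclideanSpace_fin] at hid
  have hc := hu.const_nonneg hx
  have hM₂' := (norm_nonneg _).trans hM₂
  calc θ * (c ^ 2 * s ^ 4) ≤ θ * (n * lorentzOp (gradient u x) (A ∘L A)) := by gcongr
    _ = n * (θ * lorentzOp (gradient u x) (A ∘L A)) := by ring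
    _ ≤ n * (7 * c * (ε * ‖gradient g x‖) + ε * M₂ * lorentzOp (gradient u x) (.id ℝ _)) := by
        gcongr; linarith
    _ ≤ n * (7 * c * (ε * M₁) + ε * M₂ * (n + 1)) := by gcongr
    _ = ε * (n * (7 * c * M₁ + (n + 1) * M₂)) := by ring

theorem comp_gradient_eq_zero (hu : IsSol n Ω Ω' u c) (hΩ : IsOpen Ω) (hh : Continuous h)
    (hΩ' : Ω' = {p | 0 < h p}) (hx : x ∈ frontier Ω) : h (gradient u x) = 0 := by
  have hΩ'o : IsOpen Ω' := hΩ' ▸ isOpen_lt continuous_const hh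
  exact (frontier_lt_subset_eq continuous_const hh
    (hΩ' ▸ hu.gradient_mem_frontier hΩ hΩ'o hx)).symm

theorem mul_le_comp_gradient (hu : IsSol n Ω Ω' u c) (hΩb : Bornology.IsBounded Ω)
    (hg : ContDiff ℝ 2 g) (hΩ : Ω = {p | 0 < g p}) (hh : ContDiff ℝ 2 h)
    (hΩ' : Ω' = {p | 0 < h p}) (hs : 0 < s) (hsΩ' : ∀ p ∈ Ω', s ≤ 1 - ‖p‖ ^ 2) (hθ : 0 < θ)
    (hhess : ∀ p ξ, ⟪ξ, fderiv ℝ (gradient h) p ξ⟫ ≤ -θ * ‖ξ‖ ^ 2) (hε : 0 < ε)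
    (hM₁ : ∀ y ∈ closure Ω, ‖gradient g y‖ ≤ M₁)
    (hM₂ : ∀ y ∈ closure Ω, ‖fderiv ℝ (gradient g) y‖ ≤ M₂)
    (hsmall : ε * (n * (7 * c * M₁ + (n + 1) * M₂)) < θ * (c ^ 2 * s ^ 4)) (hx : x ∈ closure Ω) :
    ε * g x ≤ h (gradient u x) := by
  have hΩo : IsOpen Ω := hΩ ▸ isOpen_lt continuous_const hg.continuous
  have hcont : ContinuousOn (fun y ↦ h (gradient u y) - ε * g y) (closure Ω) :=
    (hh.continuous.comp_continuousOn hu.continuousOn_gradient).sub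
      (hg.continuous.const_mul ε).continuousOn
  obtain ⟨y, hy, hmin⟩ := hΩb.isCompact_closure.exists_isMinOn ⟨x, hx⟩ hcont
  have hy_frontier : y ∈ frontier Ω := by
    refine ⟨hy, fun hy_interior ↦ hsmall.not_ge ?_⟩
    exact hu.le_of_isLocalMin hΩo (interior_subset hy_interior) hs hsΩ' hh hg hθ hhess hε
      (hM₁ y hy) (hM₂ y hy)
      (hmin.isLocalMin (mem_of_superset (mem_interior_iff_mem_nhds.1 hy_interior) subset_closure))
  have hgy : g y = 0 :=
    (frontier_lt_subset_eq continuous_const hg.continuous (hΩ ▸ hy_frontier)).symm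
  have hhy := hu.comp_gradient_eq_zero hΩo hh.continuous hΩ' hy_frontier
  have hle : h (gradient u y) - ε * g y ≤ h (gradient u x) - ε * g x := hmin hx
  rw [hgy, hhy] at hle
  linarith

theorem le_mul_inner_gradient (hu : IsSol n Ω Ω' u c) (hg : ContDiff ℝ 2 g)
    (hΩ : Ω = {p | 0 < g p}) (hh : ContDiff ℝ 2 h) (hΩ' : Ω' = {p | 0 < h p}) (hε : 0 < ε)
    (hbarrier : ∀ y ∈ closure Ω, ε * g y ≤ h (gradient u y)) (hx : x ∈ frontier Ω)
    (hν : ‖gradient g x‖ = 1) : ε ≤ c * ⟪gradient h (gradient u x), gradient g x⟫ := by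
  have hΩo : IsOpen Ω := hΩ ▸ isOpen_lt continuous_const hg.continuous
  have hx' : x ∈ closure Ω := frontier_subset_closure hx
  have hgx : g x = 0 := (frontier_lt_subset_eq continuous_const hg.continuous (hΩ ▸ hx)).symm
  have hhx := hu.comp_gradient_eq_zero hΩo hh.continuous hΩ' hx
  obtain ⟨l, hl, hgrad⟩ := exists_nonneg_smul_gradient_eq
    (hasGradientAt_comp_sub_const_mul (ε := ε) (hh.differentiable two_ne_zero _)
      (hu.contDiffAt hx' (m := 2)) (hg.differentiable two_ne_zero x))
    (hg.differentiable two_ne_zero x).hasGradientAt (norm_ne_zero_iff.1 (by simp [hν]))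
    (by simp [hgx, hhx]) hgx
    fun y hy ↦ sub_nonneg.2 (hbarrier y (subset_closure (hΩ ▸ hy)))
  have hAb : fderiv ℝ (gradient u) x (gradient h (gradient u x)) = (l + ε) • gradient g x := by
    rw [add_smul, ← hgrad, sub_add_cancel]
  have hle := le_trace_mul_inner_of_apply_eq_smul (hu.isPositive_hessian hx') hν (by linarith) hAb
  have hinner : 0 ≤ ⟪gradient h (gradient u x), gradient g x⟫ :=
    (pos_of_mul_pos_right ((by linarith : 0 < l + ε).trans_le hle)
      (hu.trace_hessian_nonneg hx')).le
  calc ε ≤ l + ε := by linarith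
    _ ≤ _ := hle
    _ ≤ c * ⟪gradient h (gradient u x), gradient g x⟫ := by gcongr; exact hu.trace_hessian_le hx'

end IsSol

theorem exists_pos_le_one_sub_norm_sq {E : Type*} [NormedAddCommGroup E] [ProperSpace E] {S : Set E}
    (hS : closure S ⊆ Metric.ball 0 1) : ∃ s : ℝ, 0 < s ∧ ∀ p ∈ S, s ≤ 1 - ‖p‖ ^ 2 := by
  obtain ⟨r, hr, hSr⟩ := exists_lt_subset_ball isClosed_closure hS
  refine ⟨1 - r, sub_pos.2 hr, fun p hp ↦ ?_⟩
  have hpr : ‖p‖ < r := mem_ball_zero_iff.1 (hSr (subset_closure hp))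
  nlinarith [norm_nonneg p]

theorem exists_pos_forall_mul_le_comp_gradient {n : ℕ} {Ω Ω' : Set (EuclideanSpace ℝ (Fin n))}
    {g h : EuclideanSpace ℝ (Fin n) → ℝ} {s θ k K : ℝ} (hΩb : Bornology.IsBounded Ω)
    (hg : ContDiff ℝ 2 g) (hΩ : Ω = {p | 0 < g p}) (hh : ContDiff ℝ 2 h)
    (hΩ' : Ω' = {p | 0 < h p}) (hs : 0 < s) (hsΩ' : ∀ p ∈ Ω', s ≤ 1 - ‖p‖ ^ 2) (hθ : 0 < θ)
    (hhess : ∀ p ξ, ⟪ξ, fderiv ℝ (gradient h) p ξ⟫ ≤ -θ * ‖ξ‖ ^ 2) (hk : 0 < k) :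
    ∃ ε : ℝ, 0 < ε ∧ ∀ u c, k ≤ c → c ≤ K → IsSol n Ω Ω' u c →
      ∀ x ∈ closure Ω, ε * g x ≤ h (gradient u x) := by
  have hgrad : ContDiff ℝ 1 (gradient g) :=
    contDiff_iff_contDiffAt.2 fun y ↦ contDiffAt_gradient hg.contDiffAt (by norm_num)
  obtain ⟨M₁, hM₁⟩ :=
    hΩb.isCompact_closure.exists_bound_of_continuousOn hgrad.continuous.continuousOn
  obtain ⟨M₂, hM₂⟩ := hΩb.isCompact_closure.exists_bound_of_continuousOn
    (hgrad.continuous_fderiv one_ne_zero).continuousOn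
  obtain ⟨ε, hε, hsmall⟩ := exists_pos_mul_lt (show 0 < θ * (k ^ 2 * s ^ 4) by positivity)
    (n * (7 * K * M₁ + (n + 1) * M₂))
  refine ⟨ε, hε, fun u c hkc hcK hu x hx ↦ ?_⟩
  have hM₁_nonneg := (norm_nonneg _).trans (hM₁ x hx)
  refine hu.mul_le_comp_gradient hΩb hg hΩ hh hΩ' hs hsΩ' hθ hhess hε hM₁ hM₂ ?_ hx
  calc ε * (n * (7 * c * M₁ + (n + 1) * M₂)) ≤ ε * (n * (7 * K * M₁ + (n + 1) * M₂)) := by gcongr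
    _ = n * (7 * K * M₁ + (n + 1) * M₂) * ε := mul_comm _ _
    _ < θ * (k ^ 2 * s ^ 4) := hsmall
    _ ≤ θ * (c ^ 2 * s ^ 4) := by gcongr

theorem ne_zero_of_frontier_nonempty {n : ℕ} {S : Set (EuclideanSpace ℝ (Fin n))}
    (hS : (frontier S).Nonempty) : n ≠ 0 := by
  rintro rfl
  have hS' : S.Nonempty := closure_nonempty_iff.1 (hS.mono frontier_subset_closure)
  simp [Subsingleton.eq_univ_of_nonempty hS'] at hS

theorem statement10_general {n : ℕ} {Ω Ω' : Set (EuclideanSpace ℝ (Fin n))}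
    {g h : EuclideanSpace ℝ (Fin n) → ℝ} {θ : ℝ} (hΩb : Bornology.IsBounded Ω)
    (hg : ContDiff ℝ 2 g) (hΩ : Ω = {p | 0 < g p}) (hν : ∀ p ∈ frontier Ω, ‖gradient g p‖ = 1)
    (hh : ContDiff ℝ 2 h) (hΩ' : Ω' = {p | 0 < h p}) (hθ : 0 < θ)
    (hhess : ∀ p ξ, ⟪ξ, fderiv ℝ (gradient h) p ξ⟫ ≤ -θ * ‖ξ‖ ^ 2)
    (hsub : closure Ω' ⊆ Metric.ball 0 1) :
    ∃ C₁ : ℝ, 0 < C₁ ∧ ∀ u c, IsSol n Ω Ω' u c → ∀ x ∈ frontier Ω,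
      1 / C₁ ≤ ⟪gradient h (gradient u x), gradient g x⟫ := by
  obtain hempty | hfrontier := (frontier Ω).eq_empty_or_nonempty
  · exact ⟨1, one_pos, by simp [hempty]⟩
  have hΩne : Ω.Nonempty := closure_nonempty_iff.1 (hfrontier.mono frontier_subset_closure)
  obtain hempty' | hΩ'ne := Ω'.eq_empty_or_nonempty
  · exact ⟨1, one_pos, fun u c hu ↦
      ((hu.bijOn_gradient.image_eq ▸ hΩne.image _).ne_empty hempty').elim⟩
  have hΩo : IsOpen Ω := hΩ ▸ isOpen_lt continuous_const hg.continuous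
  have hΩ'o : IsOpen Ω' := hΩ' ▸ isOpen_lt continuous_const hh.continuous
  obtain ⟨s, hs, hsΩ'⟩ := exists_pos_le_one_sub_norm_sq hsub
  obtain ⟨k, hk, hkc⟩ :=
    IsSol.exists_pos_le_const (ne_zero_of_frontier_nonempty hfrontier) hΩo hΩb hΩ'o hΩ'ne
  obtain ⟨K, hK, hcK⟩ := IsSol.exists_const_le hΩo hΩne hs hsΩ'
  obtain ⟨ε, hε, hbarrier⟩ :=
    exists_pos_forall_mul_le_comp_gradient hΩb hg hΩ hh hΩ' hs hsΩ' hθ hhess hk (K := K)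
  refine ⟨K / ε, by positivity, fun u c hu x hx ↦ ?_⟩
  have hle := hu.le_mul_inner_gradient hg hΩ hh hΩ' hε
    (hbarrier u c (hkc u c hu) (hcK u c hu) hu) hx (hν x hx)
  have hinner := pos_of_mul_pos_right (hε.trans_le hle) (hk.le.trans (hkc u c hu))
  rw [one_div_div, div_le_iff₀' hK]
  exact hle.trans (by gcongr; exact hcK u c hu)

/-- Lemma 3.6, strict obliqueness.  There is `C₁ > 0`, depending only on
the domains, with `⟨∇h(∇u(x)), ∇h̃(x)⟩ ≥ 1/C₁` on `∂Ω` for every strictly convex solution. -/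
theorem statement10 (n : ℕ) (hn : 2 ≤ n) (Ω Ω' : Set (EuclideanSpace ℝ (Fin n)))
    (g h : EuclideanSpace ℝ (Fin n) → ℝ) (θ₁ θ₂ : ℝ)
    (hΩb : Bornology.IsBounded Ω) (hΩ'b : Bornology.IsBounded Ω')
    (hΩ : IsUnifConvexDefFn n Ω g θ₁) (hΩ' : IsUnifConvexDefFn n Ω' h θ₂)
    (hsub : closure Ω' ⊆ Metric.ball (0 : EuclideanSpace ℝ (Fin n)) 1) :
    ∃ C₁ : ℝ, 0 < C₁ ∧
      ∀ (u : EuclideanSpace ℝ (Fin n) → ℝ) (c : ℝ), IsSol n Ω Ω' u c →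
        ∀ x ∈ frontier Ω, 1 / C₁ ≤ ⟪gradient h (gradient u x), gradient g x⟫ := by
  exact statement10_general hΩb (contDiff_infty.1 hΩ.1 2) hΩ.2.1 hΩ.2.2.1
    (contDiff_infty.1 hΩ'.1 2) hΩ'.2.1 hΩ'.2.2.2.1 hΩ'.2.2.2.2 hsub
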